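/- arXiv:2112.13728 — 5 statements merged into one kernel-verified Lean document; each statement's English description precedes it below -/
import Mathlib

section
/- Let r₁, r₂ > 0 and θ > 0 satisfy θ·r₁·r₂ < 1. Then the double contour integral over upper semicircles of radii r₁ and r₂ of log| (θ^{-1} − ζ₁ζ₂) / (θ^{-1} − ζ₁·conj(ζ₂)) | · (Im ζ₁ / ζ₁) · (Im ζ₂ / ζ₂) dζ₁ dζ₂ equals −π²·θ·r₁²·r₂²/2. Here log|·| is the real logarithm of the complex absolute value. -/
open Complex Real

/-- The iterated contour integral `∮∮ f(ζ₁,ζ₂) dζ₁ dζ₂` over upper semicircles of radii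
`r₁` and `r₂` centered at the origin. -/
noncomputable def semicircleIntegral2 (f : ℂ → ℂ → ℂ) (r₁ r₂ : ℝ) : ℂ :=
  ∫ t₁ in (0 : ℝ)..π, ∫ t₂ in (0 : ℝ)..π,
    f ((r₁ : ℂ) * Complex.exp (Complex.I * t₁)) ((r₂ : ℂ) * Complex.exp (Complex.I * t₂)) *
      (Complex.I * r₁ * Complex.exp (Complex.I * t₁)) *
      (Complex.I * r₂ * Complex.exp (Complex.I * t₂))

/-!
For `‖w * z‖ < 1` the logarithmic series gives
`log ‖1 - w * z‖ - log ‖1 - w * conj z‖ = ∑ n, 2 / n * Im (w ^ n) * Im (z ^ n)`.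
With `w = θ * ζ₁` and `z = ζ₂ = r₂ * exp (I * t)` this is the Fourier sine series in `t` of the
kernel. Since `(Im ζ₂ / ζ₂) dζ₂ = I * r₂ * sin t dt`, only the term `n = 1` survives the integration
over `ζ₂`: the integral of the kernel against `sin t` is `π * r₂ * Im (θ * ζ₁)`. What remains is the
integral of `Im (θ * exp (I * s)) * sin s`.
-/

open scoped ComplexConjugate

theorem integral_cos_int_mul_eq_zero {k : ℤ} (hk : k ≠ 0) :
    ∫ t in (0 : ℝ)..π, Real.cos (k * t) = 0 := by
  rw [intervalIntegral.integral_comp_mul_left (fun x ↦ Real.cos x) (Int.cast_ne_zero.2 hk)]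
  simp [Real.sin_int_mul_pi]

theorem integral_sin_nat_mul_mul_sin_nat_mul (m : ℕ) {n : ℕ} (hn : n ≠ 0) :
    ∫ t in (0 : ℝ)..π, Real.sin (m * t) * Real.sin (n * t) = if m = n then π / 2 else 0 := by
  have product_to_sum (t : ℝ) : Real.sin (m * t) * Real.sin (n * t) =
      (Real.cos ((m - n : ℤ) * t) - Real.cos ((m + n : ℤ) * t)) / 2 := by
    push_cast
    rw [sub_mul, add_mul, Real.cos_sub, Real.cos_add]
    ring
  simp_rw [product_to_sum]
  rw [intervalIntegral.integral_div, intervalIntegral.integral_sub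
    (Continuous.intervalIntegrable (by fun_prop) _ _)
    (Continuous.intervalIntegrable (by fun_prop) _ _),
    integral_cos_int_mul_eq_zero (by lia : (m + n : ℤ) ≠ 0)]
  split_ifs with hmn
  · simp [hmn]
  · rw [integral_cos_int_mul_eq_zero (by lia), sub_zero, zero_div]

theorem im_ofReal_mul_exp_I_mul_pow (r t : ℝ) (n : ℕ) :
    (((r : ℂ) * Complex.exp (I * t)) ^ n).im = r ^ n * Real.sin (n * t) := by
  have de_moivre : ((r : ℂ) * Complex.exp (I * t)) ^ n =
      (r ^ n : ℝ) * Complex.exp ((n * t : ℝ) * I) := by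
    rw [mul_pow, ← Complex.exp_nat_mul]
    push_cast
    ring_nf
  rw [de_moivre, im_ofReal_mul, exp_ofReal_mul_I_im]

theorem im_ofReal_mul_exp_I_mul (r t : ℝ) :
    ((r : ℂ) * Complex.exp (I * t)).im = r * Real.sin t := by
  simpa using im_ofReal_mul_exp_I_mul_pow r t 1

theorem norm_ofReal_mul_exp_I_mul (r t : ℝ) :
    ‖(r : ℂ) * Complex.exp (I * t)‖ = ‖(r : ℂ)‖ := by
  rw [norm_mul, norm_exp_I_mul_ofReal, mul_one]

theorem integral_im_mul_exp_I_mul_mul_sin (w : ℂ) :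
    ∫ t in (0 : ℝ)..π, (w * Complex.exp (I * t)).im * Real.sin t = π / 2 * w.re := by
  have expand (t : ℝ) : (w * Complex.exp (I * t)).im * Real.sin t =
      w.re * Real.sin t ^ 2 + w.im * (Real.sin t * Real.cos t) := by
    rw [mul_comm I, mul_im, exp_ofReal_mul_I_im, exp_ofReal_mul_I_re]
    ring
  simp_rw [expand]
  rw [intervalIntegral.integral_add (Continuous.intervalIntegrable (by fun_prop) _ _)
    (Continuous.intervalIntegrable (by fun_prop) _ _), intervalIntegral.integral_const_mul,
    intervalIntegral.integral_const_mul, integral_sin_sq, integral_sin_mul_cos₁]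
  simp only [Real.sin_zero, Real.sin_pi]
  ring

theorem hasSum_neg_log_norm_one_sub {z : ℂ} (hz : ‖z‖ < 1) :
    HasSum (fun n : ℕ ↦ (z ^ n).re / n) (-Real.log ‖1 - z‖) := by
  simpa only [neg_re, log_re, div_natCast_re] using hasSum_re (hasSum_taylorSeries_neg_log hz)

theorem hasSum_log_norm_one_sub_mul_sub_conj {w z : ℂ} (h : ‖w * z‖ < 1) :
    HasSum (fun n : ℕ ↦ 2 / n * (w ^ n).im * (z ^ n).im)
      (Real.log ‖1 - w * z‖ - Real.log ‖1 - w * conj z‖) := by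
  have h_conj : ‖w * conj z‖ < 1 := by rwa [norm_mul, norm_conj, ← norm_mul]
  have coeff_eq (n : ℕ) : 2 / n * (w ^ n).im * (z ^ n).im =
      ((w * conj z) ^ n).re / n - ((w * z) ^ n).re / n := by
    simp only [mul_pow, ← map_pow, mul_re, conj_re, conj_im]
    ring
  simp_rw [coeff_eq]
  rw [← neg_sub_neg]
  exact (hasSum_neg_log_norm_one_sub h_conj).sub (hasSum_neg_log_norm_one_sub h)

theorem norm_two_div_mul_im_pow_mul_im_pow_le (w z : ℂ) (n : ℕ) :
    ‖2 / n * (w ^ n).im * (z ^ n).im‖ ≤ 2 * ‖w * z‖ ^ n := by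
  have h_coeff : ‖(2 / n : ℝ)‖ ≤ 2 := by
    rw [Real.norm_of_nonneg (by positivity)]
    rcases n.eq_zero_or_pos with rfl | hn
    · simp
    · exact div_le_self zero_le_two (Nat.one_le_cast.2 hn)
  calc ‖2 / n * (w ^ n).im * (z ^ n).im‖
      = ‖(2 / n : ℝ)‖ * |(w ^ n).im| * |(z ^ n).im| := by
        rw [norm_mul, norm_mul, Real.norm_eq_abs (w ^ n).im, Real.norm_eq_abs (z ^ n).im]
    _ ≤ 2 * ‖w ^ n‖ * ‖z ^ n‖ := by gcongr <;> exact abs_im_le_norm _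
    _ = 2 * ‖w * z‖ ^ n := by rw [mul_assoc, ← norm_mul, ← mul_pow, norm_pow]

theorem integral_log_norm_one_sub_mul_sub_conj_mul_sin {w : ℂ} {r : ℝ} (h : ‖w * r‖ < 1)
    {k : ℕ} (hk : k ≠ 0) :
    ∫ t in (0 : ℝ)..π, (Real.log ‖1 - w * (r * Complex.exp (I * t))‖ -
        Real.log ‖1 - w * conj (r * Complex.exp (I * t))‖) * Real.sin (k * t) =
      π / k * (w ^ k).im * r ^ k := by
  set z : ℝ → ℂ := fun t ↦ r * Complex.exp (I * t)
  have norm_mul_z (t : ℝ) : ‖w * z t‖ = ‖w * r‖ := by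
    rw [norm_mul, norm_ofReal_mul_exp_I_mul, ← norm_mul]
  have integral_term (n : ℕ) :
      ∫ t in (0 : ℝ)..π, 2 / n * (w ^ n).im * (z t ^ n).im * Real.sin (k * t) =
        if n = k then π / k * (w ^ k).im * r ^ k else 0 := by
    simp_rw [z, im_ofReal_mul_exp_I_mul_pow, ← mul_assoc, mul_assoc _ (Real.sin _)]
    rw [intervalIntegral.integral_const_mul, integral_sin_nat_mul_mul_sin_nat_mul n hk]
    split_ifs with hnk
    · rw [hnk]
      ring
    · exact mul_zero _
  have hasSum_integral := intervalIntegral.hasSum_integral_of_dominated_convergence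
    (μ := MeasureTheory.volume) (a := 0) (b := π)
    (F := fun (n : ℕ) t ↦ 2 / n * (w ^ n).im * (z t ^ n).im * Real.sin (k * t))
    (bound := fun n _ ↦ 2 * ‖w * r‖ ^ n)
    (fun n ↦ Continuous.aestronglyMeasurable (by fun_prop))
    (fun n ↦ .of_forall fun t _ ↦ by
      rw [norm_mul, ← norm_mul_z t]
      exact (mul_le_of_le_one_right (norm_nonneg _) (Real.abs_sin_le_one _)).trans
        (norm_two_div_mul_im_pow_mul_im_pow_le w (z t) n))
    (.of_forall fun _ _ ↦ (summable_geometric_of_lt_one (norm_nonneg _) h).mul_left 2)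
    intervalIntegrable_const
    (.of_forall fun t _ ↦
      (hasSum_log_norm_one_sub_mul_sub_conj ((norm_mul_z t).trans_lt h)).mul_right _)
  simp_rw [integral_term] at hasSum_integral
  exact hasSum_integral.unique (hasSum_ite_eq k _)

theorem log_norm_inv_sub_div_inv_sub {θ x y : ℂ} (hθ : θ ≠ 0) (hx : ‖θ * x‖ < 1)
    (hy : ‖θ * y‖ < 1) :
    Real.log ‖(θ⁻¹ - x) / (θ⁻¹ - y)‖ = Real.log ‖1 - θ * x‖ - Real.log ‖1 - θ * y‖ := by
  have norm_one_sub_ne_zero {u : ℂ} (hu : ‖u‖ < 1) : ‖1 - u‖ ≠ 0 :=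
    norm_ne_zero_iff.2 <| sub_ne_zero.2 fun h_eq ↦ by simp [← h_eq] at hu
  have factor (u : ℂ) : θ⁻¹ - u = θ⁻¹ * (1 - θ * u) := by
    rw [mul_sub, mul_one, inv_mul_cancel_left₀ hθ]
  rw [factor x, factor y, mul_div_mul_left _ _ (inv_ne_zero hθ), norm_div,
    Real.log_div (norm_one_sub_ne_zero hx) (norm_one_sub_ne_zero hy)]

theorem im_div_self_mul_I_mul_exp (r t : ℝ) :
    (((r * Complex.exp (I * t)).im : ℂ) / (r * Complex.exp (I * t))) *
      (I * r * Complex.exp (I * t)) = I * (r * Real.sin t : ℝ) := by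
  rw [im_ofReal_mul_exp_I_mul]
  rcases eq_or_ne r 0 with rfl | hr
  · simp
  · have hr' : (r : ℂ) ≠ 0 := ofReal_ne_zero.2 hr
    have h_exp := Complex.exp_ne_zero (I * t)
    field_simp

theorem semicircleIntegral2_ofReal_mul_im_div_self (K : ℂ → ℂ → ℝ) (r₁ r₂ : ℝ) :
    semicircleIntegral2 (fun ζ₁ ζ₂ ↦ (K ζ₁ ζ₂ : ℂ) * (ζ₁.im / ζ₁) * (ζ₂.im / ζ₂)) r₁ r₂ =
      (-(r₁ * r₂) * ∫ s in (0 : ℝ)..π, (∫ t in (0 : ℝ)..π,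
        K (r₁ * Complex.exp (I * s)) (r₂ * Complex.exp (I * t)) * Real.sin t) *
          Real.sin s : ℝ) := by
  have integrand_eq (s t k : ℝ) :
      (k : ℂ) * ((r₁ * Complex.exp (I * s)).im / (r₁ * Complex.exp (I * s))) *
        ((r₂ * Complex.exp (I * t)).im / (r₂ * Complex.exp (I * t))) *
        (I * r₁ * Complex.exp (I * s)) * (I * r₂ * Complex.exp (I * t)) =
      (-(r₁ * r₂) * (k * Real.sin t * Real.sin s) : ℝ) := by
    calc _ = (k : ℂ) * (I * (r₁ * Real.sin s : ℝ)) * (I * (r₂ * Real.sin t : ℝ)) := by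
          rw [← im_div_self_mul_I_mul_exp r₁ s, ← im_div_self_mul_I_mul_exp r₂ t]
          ring
      _ = I ^ 2 * (r₁ * r₂ * (k * Real.sin t * Real.sin s) : ℝ) := by
          push_cast
          ring
      _ = _ := by
          rw [I_sq]
          push_cast
          ring
  simp only [semicircleIntegral2, integrand_eq, intervalIntegral.integral_ofReal,
    intervalIntegral.integral_const_mul, intervalIntegral.integral_mul_const]

theorem semicircle_double_integral_log_kernel_general (r₁ r₂ : ℝ) {θ : ℂ} (hθ : θ ≠ 0)
    (h : ‖θ * r₁ * r₂‖ < 1) :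
    semicircleIntegral2
      (fun ζ₁ ζ₂ ↦ (Real.log ‖(θ⁻¹ - ζ₁ * ζ₂) / (θ⁻¹ - ζ₁ * conj ζ₂)‖ : ℂ) *
        (ζ₁.im / ζ₁) * (ζ₂.im / ζ₂)) r₁ r₂ =
      -((π : ℂ) ^ 2 * θ.re * r₁ ^ 2 * r₂ ^ 2 / 2) := by
  rw [semicircleIntegral2_ofReal_mul_im_div_self
    (fun ζ₁ ζ₂ ↦ Real.log ‖(θ⁻¹ - ζ₁ * ζ₂) / (θ⁻¹ - ζ₁ * conj ζ₂)‖)]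
  have inner_integral (s : ℝ) : ∫ t in (0 : ℝ)..π,
      Real.log ‖(θ⁻¹ - r₁ * Complex.exp (I * s) * (r₂ * Complex.exp (I * t))) /
        (θ⁻¹ - r₁ * Complex.exp (I * s) * conj (r₂ * Complex.exp (I * t)))‖ * Real.sin t =
      π * r₂ * (θ * r₁ * Complex.exp (I * s)).im := by
    have h_norm : ‖θ * r₁ * Complex.exp (I * s) * r₂‖ < 1 := by
      rwa [mul_right_comm, norm_mul, norm_exp_I_mul_ofReal, mul_one]
    have h_log (t : ℝ) := log_norm_inv_sub_div_inv_sub hθ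
      (x := r₁ * Complex.exp (I * s) * (r₂ * Complex.exp (I * t)))
      (y := r₁ * Complex.exp (I * s) * conj (r₂ * Complex.exp (I * t)))
      (by simpa [norm_exp_I_mul_ofReal, mul_assoc] using h)
      (by simpa [norm_exp_I_mul_ofReal, mul_assoc] using h)
    simp_rw [h_log, ← mul_assoc θ]
    simpa [mul_right_comm] using
      integral_log_norm_one_sub_mul_sub_conj_mul_sin h_norm one_ne_zero
  simp_rw [inner_integral, mul_assoc (π * r₂)]
  rw [intervalIntegral.integral_const_mul, integral_im_mul_exp_I_mul_mul_sin, re_mul_ofReal]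
  push_cast
  ring

/-- The double semicircle contour integral of
`log| (θ⁻¹ − ζ₁ζ₂)/(θ⁻¹ − ζ₁·conj ζ₂) | · (Im ζ₁/ζ₁) · (Im ζ₂/ζ₂)`
equals `−π²·θ·r₁²·r₂²/2`. -/
theorem semicircle_double_integral_log_kernel (r₁ r₂ θ : ℝ)
    (hr₁ : 0 < r₁) (hr₂ : 0 < r₂) (hθ : 0 < θ) (h : θ * r₁ * r₂ < 1) :
    semicircleIntegral2
      (fun ζ₁ ζ₂ =>
        ((Real.log (norm
            ((((θ : ℂ))⁻¹ - ζ₁ * ζ₂) / (((θ : ℂ))⁻¹ - ζ₁ * (starRingEnd ℂ) ζ₂))) : ℂ)) *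
          ((ζ₁.im : ℂ) / ζ₁) * ((ζ₂.im : ℂ) / ζ₂))
      r₁ r₂ =
      -(((π : ℂ)) ^ 2 * θ * r₁ ^ 2 * r₂ ^ 2 / 2) :=
  semicircle_double_integral_log_kernel_general r₁ r₂ (ofReal_ne_zero.2 hθ.ne')
    (by simpa [abs_of_pos, hr₁, hr₂, hθ] using h)
end

section
/- Let μ₁, ν₁, μ₂, ν₂ > 0, set a_k = μ_k + ν_k and r_k = √(μ_k ν_k) for k = 1, 2, let p, q ≥ 1 be integers, and let θ > 0 satisfy θ·r₁·r₂ < 1. Then the following integration-by-parts identity holds: −4·p·q · ∮∮_{upper semicircles, radii r₁, r₂} (a₁ + 2Re ζ₁)^{p−1} (a₂ + 2Re ζ₂)^{q−1} · log| (θ^{-1} − ζ₁ζ₂)/(θ^{-1} − ζ₁·conj(ζ₂)) | · (Im ζ₁/ζ₁)(Im ζ₂/ζ₂) dζ₁ dζ₂ = (2π²/θ) · (1/(2πi))² · ∮∮_{counterclockwise circles, radii r₁, r₂} (a₁ + 2Re ζ₁)^{p} (a₂ + 2Re ζ₂)^{q} / (θ^{-1} − ζ₁ζ₂)² dζ₁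 dζ₂. -/
open Complex Real

/-!
Put `Z t = s * exp (i t)` with `s = θ r₁ r₂`. The logarithmic kernel on the semicircles is the
difference of the values of `log ‖1 - Z‖` at `t₁ + t₂` and at `t₁ - t₂`, and `2 * log ‖1 - Z t‖`
is the symmetrization `L t + L (-t)` of the holomorphic branch `L t = log (1 - Z t)`. The other
factors are the derivatives of even functions of the angles, hence odd, so the integral over
`[0, π]²` unfolds to half the integral of `L (t₁ + t₂)` against the same factors over the full
torus. There, integrating by parts once in each angle leaves no boundary terms and turns `L`
into `L'' = Z / (1 - Z) ^ 2`, the kernel of the double circle integral.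
-/

section PeriodicIntegrals

open intervalIntegral Function
open MeasureTheory (volume)

variable {E : Type*} [NormedAddCommGroup E] [NormedSpace ℝ E] {T : ℝ}

lemma periodic_of_hasDerivAt {f f' : ℝ → E} (hf : ∀ t, HasDerivAt f (f' t) t)
    (hper : Periodic f T) : Periodic f' T := fun t ↦ by
  have h := (hf (t + T)).comp_add_const t T
  rw [funext hper] at h
  exact h.unique (hf t)

lemma odd_of_hasDerivAt_of_even {f f' : ℝ → E} (hf : ∀ t, HasDerivAt f (f' t) t)
    (heven : Function.Even f) : Function.Odd f' := fun t ↦ by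
  have h := (hf (-t)).scomp t (hasDerivAt_neg t)
  rw [show f ∘ Neg.neg = f from funext heven, neg_one_smul] at h
  rw [(hf t).unique h, neg_neg]

lemma integral_zero_two_mul_of_periodic {f : ℝ → E}
    (hint : ∀ a b, IntervalIntegrable f volume a b) (hper : Periodic f (2 * T)) :
    ∫ t in 0..2 * T, f t = ∫ t in 0..T, (f t + f (-t)) := by
  have hneg : IntervalIntegrable (fun t ↦ f (-t)) volume 0 T := by
    simpa using (IntervalIntegrable.iff_comp_neg (by simp)).1 (hint 0 (-T))
  calc ∫ t in 0..2 * T, f t = ∫ t in -T..T, f t := by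
        convert hper.intervalIntegral_add_eq 0 (-T) using 2 <;> ring
    _ = (∫ t in -T..0, f t) + ∫ t in 0..T, f t :=
        (integral_add_adjacent_intervals (hint _ _) (hint _ _)).symm
    _ = ∫ t in 0..T, (f t + f (-t)) := by
        rw [integral_add (hint _ _) hneg, integral_comp_neg, neg_zero, add_comm]

lemma integral_integral_zero_two_mul_of_periodic {F : ℝ → ℝ → E} (hF : Continuous (uncurry F))
    (hper₁ : ∀ y, Periodic (F · y) (2 * T)) (hper₂ : ∀ x, Periodic (F x) (2 * T)) :
    ∫ x in 0..2 * T, ∫ y in 0..2 * T, F x y =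
      ∫ x in 0..T, ∫ y in 0..T, (F x y + F x (-y) + (F (-x) y + F (-x) (-y))) := by
  have hFx (x : ℝ) : Continuous (F x) := hF.uncurry_left x
  have hfold : Continuous (uncurry fun x y ↦ F x y + F x (-y)) :=
    hF.add (hF.comp (continuous_fst.prodMk continuous_snd.neg))
  have hinner (x : ℝ) : ∫ y in 0..2 * T, F x y = ∫ y in 0..T, (F x y + F x (-y)) :=
    integral_zero_two_mul_of_periodic (fun _ _ ↦ (hFx x).intervalIntegrable _ _) (hper₂ x)
  have hcont : Continuous fun x ↦ ∫ y in 0..T, (F x y + F x (-y)) :=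
    continuous_parametric_intervalIntegral_of_continuous' hfold 0 T
  simp only [hinner]
  rw [integral_zero_two_mul_of_periodic (fun _ _ ↦ hcont.intervalIntegrable _ _)
    fun x ↦ by simp only [(hper₁ _ x :)]]
  refine integral_congr fun x _ ↦ (integral_add ?_ ?_).symm <;>
    exact (hfold.uncurry_left _).intervalIntegrable _ _

lemma intervalIntegral_intervalIntegral_swap_of_continuous {F : ℝ → ℝ → E}
    (hF : Continuous (uncurry F)) (a b c d : ℝ) :
    ∫ x in a..b, ∫ y in c..d, F x y = ∫ y in c..d, ∫ x in a..b, F x y :=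
  MeasureTheory.intervalIntegral_intervalIntegral_swap <|
    (hF.continuousOn.integrableOn_compact (isCompact_uIcc.prod isCompact_uIcc)).mono_set
      (Set.prod_mono Set.uIoc_subset_uIcc Set.uIoc_subset_uIcc)

variable {𝕜 : Type*} [RCLike 𝕜]

lemma integral_integral_odd_mul_odd_mul_comp_add {u v L : ℝ → 𝕜}
    (hu : Continuous u) (hv : Continuous v) (hL : Continuous L)
    (hu_per : Periodic u (2 * T)) (hv_per : Periodic v (2 * T)) (hL_per : Periodic L (2 * T))
    (hu_odd : Function.Odd u) (hv_odd : Function.Odd v) :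
    ∫ x in 0..2 * T, ∫ y in 0..2 * T, u x * v y * L (x + y) =
      ∫ x in 0..T, ∫ y in 0..T,
        u x * v y * ((L (x + y) + L (-(x + y))) - (L (x - y) + L (-(x - y)))) := by
  rw [integral_integral_zero_two_mul_of_periodic (by unfold uncurry; fun_prop)
    (fun y x ↦ by simp only [hu_per x, add_right_comm, hL_per (x + y)])
    (fun x y ↦ by simp only [hv_per y, ← add_assoc, hL_per (x + y)])]
  refine integral_congr fun x _ ↦ integral_congr fun y _ ↦ ?_
  simp only [hu_odd x, hv_odd y, ← sub_eq_add_neg, neg_add', neg_sub, neg_add_eq_sub]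
  ring

lemma integral_deriv_mul_of_periodic {u u' v v' : ℝ → 𝕜}
    (hu : ∀ t, HasDerivAt u (u' t) t) (hv : ∀ t, HasDerivAt v (v' t) t)
    (hu' : IntervalIntegrable u' volume 0 T) (hv' : IntervalIntegrable v' volume 0 T)
    (hu_per : Periodic u T) (hv_per : Periodic v T) :
    ∫ t in 0..T, u' t * v t = -∫ t in 0..T, u t * v' t := by
  rw [integral_mul_deriv_eq_deriv_mul (fun t _ ↦ hu t) (fun t _ ↦ hv t) hu' hv',
    hu_per.eq, hv_per.eq]
  ring

lemma integral_integral_deriv_mul_deriv_mul_comp_add {u u' v v' L L' L'' : ℝ → 𝕜}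
    (hu : ∀ t, HasDerivAt u (u' t) t) (hv : ∀ t, HasDerivAt v (v' t) t)
    (hL : ∀ t, HasDerivAt L (L' t) t) (hL' : ∀ t, HasDerivAt L' (L'' t) t)
    (hu'_cont : Continuous u') (hv'_cont : Continuous v') (hL''_cont : Continuous L'')
    (hu_per : Periodic u T) (hv_per : Periodic v T) (hL_per : Periodic L T) :
    ∫ x in 0..T, ∫ y in 0..T, u' x * v' y * L (x + y) =
      ∫ x in 0..T, ∫ y in 0..T, u x * v y * L'' (x + y) := by
  have hv_cont : Continuous v := continuous_iff_continuousAt.2 fun t ↦ (hv t).continuousAt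
  have hL'_cont : Continuous L' := continuous_iff_continuousAt.2 fun t ↦ (hL' t).continuousAt
  have hu_cont : Continuous u := continuous_iff_continuousAt.2 fun t ↦ (hu t).continuousAt
  have hL'_per : Periodic L' T := periodic_of_hasDerivAt hL hL_per
  have by_parts_y (x : ℝ) : ∫ y in 0..T, v' y * L (x + y) = -∫ y in 0..T, v y * L' (x + y) :=
    integral_deriv_mul_of_periodic hv (fun y ↦ (hL (x + y)).comp_const_add x y)
      (hv'_cont.intervalIntegrable _ _) (Continuous.intervalIntegrable (by fun_prop) _ _) hv_per
      fun y ↦ by rw [← add_assoc, hL_per]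
  have by_parts_x (y : ℝ) : ∫ x in 0..T, u' x * L' (x + y) = -∫ x in 0..T, u x * L'' (x + y) :=
    integral_deriv_mul_of_periodic hu (fun x ↦ (hL' (x + y)).comp_add_const x y)
      (hu'_cont.intervalIntegrable _ _) (Continuous.intervalIntegrable (by fun_prop) _ _) hu_per
      fun x ↦ by rw [add_right_comm, hL'_per]
  calc ∫ x in 0..T, ∫ y in 0..T, u' x * v' y * L (x + y)
      = ∫ x in 0..T, ∫ y in 0..T, -(v y * (u' x * L' (x + y))) := by
        simp only [mul_assoc, integral_const_mul, by_parts_y, mul_left_comm (v _), integral_neg,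
          mul_neg]
    _ = ∫ y in 0..T, ∫ x in 0..T, -(v y * (u' x * L' (x + y))) :=
        intervalIntegral_intervalIntegral_swap_of_continuous (by unfold uncurry; fun_prop) ..
    _ = ∫ y in 0..T, ∫ x in 0..T, u x * v y * L'' (x + y) := by
        simp only [mul_comm (u _) (v _), mul_assoc, integral_const_mul, by_parts_x, integral_neg,
          mul_neg, neg_neg]
    _ = ∫ x in 0..T, ∫ y in 0..T, u x * v y * L'' (x + y) :=
        intervalIntegral_intervalIntegral_swap_of_continuous (by unfold uncurry; fun_prop) ..

end PeriodicIntegrals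

section LogKernel

variable {s : ℝ}

lemma one_sub_circleMap_mem_slitPlane (hs : |s| < 1) (t : ℝ) :
    1 - circleMap 0 s t ∈ slitPlane := by
  rw [sub_eq_add_neg]
  exact mem_slitPlane_of_norm_lt_one (by rwa [norm_neg, norm_circleMap_zero])

lemma log_one_sub_circleMap_add_log_neg (hs : |s| < 1) (t : ℝ) :
    Complex.log (1 - circleMap 0 s t) + Complex.log (1 - circleMap 0 s (-t)) =
      2 * (Real.log ‖1 - circleMap 0 s t‖ : ℂ) := by
  have hconj : 1 - circleMap 0 s (-t) = (starRingEnd ℂ) (1 - circleMap 0 s t) := by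
    rw [map_sub, map_one, conj_circleMap_zero]
  rw [hconj, log_conj _ (slitPlane_arg_ne_pi (one_sub_circleMap_mem_slitPlane hs t)), add_conj,
    log_re]
  push_cast
  rfl

lemma hasDerivAt_log_one_sub_circleMap (hs : |s| < 1) (t : ℝ) :
    HasDerivAt (fun t ↦ Complex.log (1 - circleMap 0 s t))
      (-(circleMap 0 s t * I) / (1 - circleMap 0 s t)) t :=
  ((hasDerivAt_circleMap 0 s t).const_sub 1).clog_real (one_sub_circleMap_mem_slitPlane hs t)

lemma hasDerivAt_neg_circleMap_mul_I_div_one_sub (hs : |s| < 1) (t : ℝ) :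
    HasDerivAt (fun t ↦ -(circleMap 0 s t * I) / (1 - circleMap 0 s t))
      (circleMap 0 s t / (1 - circleMap 0 s t) ^ 2) t := by
  have hne := slitPlane_ne_zero (one_sub_circleMap_mem_slitPlane hs t)
  have hZ := hasDerivAt_circleMap 0 s t
  refine ((hZ.mul_const I).fun_neg.fun_div (hZ.const_sub 1) hne).congr_deriv ?_
  congr 1
  linear_combination (-circleMap 0 s t) * I_sq

open Function in
lemma integral_integral_deriv_mul_deriv_mul_log_norm_one_sub_circleMap {u u' v v' : ℝ → ℂ}
    (hs : |s| < 1) (hu : ∀ t, HasDerivAt u (u' t) t) (hv : ∀ t, HasDerivAt v (v' t) t)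
    (hu' : Continuous u') (hv' : Continuous v')
    (hu_per : Periodic u (2 * π)) (hv_per : Periodic v (2 * π))
    (hu_even : Function.Even u) (hv_even : Function.Even v) :
    2 * ∫ x in 0..π, ∫ y in 0..π, u' x * v' y *
        ((Real.log ‖1 - circleMap 0 s (x + y)‖ : ℂ) - Real.log ‖1 - circleMap 0 s (x - y)‖) =
      ∫ x in 0..2 * π, ∫ y in 0..2 * π, u x * v y *
        (circleMap 0 s (x + y) / (1 - circleMap 0 s (x + y)) ^ 2) := by
  have hL := hasDerivAt_log_one_sub_circleMap hs
  have hL_cont := continuous_iff_continuousAt.2 fun t ↦ (hL t).continuousAt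
  have hL_per : Periodic (fun t ↦ Complex.log (1 - circleMap 0 s t)) (2 * π) := fun t ↦ by
    simp only [periodic_circleMap 0 s t]
  have hL''_cont : Continuous fun t ↦ circleMap 0 s t / (1 - circleMap 0 s t) ^ 2 :=
    (continuous_circleMap 0 s).div (by fun_prop) fun t ↦
      pow_ne_zero 2 (slitPlane_ne_zero (one_sub_circleMap_mem_slitPlane hs t))
  rw [← integral_integral_deriv_mul_deriv_mul_comp_add hu hv hL
      (hasDerivAt_neg_circleMap_mul_I_div_one_sub hs) hu' hv' hL''_cont hu_per hv_per hL_per,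
    integral_integral_odd_mul_odd_mul_comp_add hu' hv' hL_cont
      (periodic_of_hasDerivAt hu hu_per) (periodic_of_hasDerivAt hv hv_per) hL_per
      (odd_of_hasDerivAt_of_even hu hu_even) (odd_of_hasDerivAt_of_even hv hv_even)]
  simp only [log_one_sub_circleMap_add_log_neg hs, ← mul_sub, mul_left_comm _ (2 : ℂ),
    intervalIntegral.integral_const_mul]

end LogKernel

section ContourIntegrals

lemma semicircleIntegral2_eq_integral_circleMap (f : ℂ → ℂ → ℂ) (r₁ r₂ : ℝ) :
    semicircleIntegral2 f r₁ r₂ = ∫ x in 0..π, ∫ y in 0..π,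
      f (circleMap 0 r₁ x) (circleMap 0 r₂ y) * (circleMap 0 r₁ x * I) *
        (circleMap 0 r₂ y * I) := by
  simp only [semicircleIntegral2, circleMap_zero, mul_comm I, mul_right_comm _ I]

lemma semicircleIntegral2_const_mul (c : ℂ) (f : ℂ → ℂ → ℂ) (r₁ r₂ : ℝ) :
    semicircleIntegral2 (fun ζ₁ ζ₂ ↦ c * f ζ₁ ζ₂) r₁ r₂ = c * semicircleIntegral2 f r₁ r₂ := by
  simp only [semicircleIntegral2, mul_assoc, intervalIntegral.integral_const_mul]

lemma circleMap_zero_mul_mul_add (c r₁ r₂ x y : ℝ) :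
    circleMap 0 (c * r₁ * r₂) (x + y) = c * (circleMap 0 r₁ x * circleMap 0 r₂ y) := by
  rw [circleMap_zero_mul, circleMap_zero, circleMap_zero, mul_assoc c, ofReal_mul, mul_assoc]

lemma inv_sub_circleMap_mul_circleMap {θ : ℝ} (hθ : θ ≠ 0) (r₁ r₂ x y : ℝ) :
    (θ : ℂ)⁻¹ - circleMap 0 r₁ x * circleMap 0 r₂ y =
      (θ : ℂ)⁻¹ * (1 - circleMap 0 (θ * r₁ * r₂) (x + y)) := by
  rw [circleMap_zero_mul_mul_add, mul_sub, mul_one, inv_mul_cancel_left₀ (ofReal_ne_zero.2 hθ)]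

lemma log_norm_inv_sub_div_inv_sub_conj {θ r₁ r₂ : ℝ} (hθ : θ ≠ 0) (h : |θ * r₁ * r₂| < 1)
    (x y : ℝ) :
    Real.log ‖((θ : ℂ)⁻¹ - circleMap 0 r₁ x * circleMap 0 r₂ y) /
        ((θ : ℂ)⁻¹ - circleMap 0 r₁ x * (starRingEnd ℂ) (circleMap 0 r₂ y))‖ =
      Real.log ‖1 - circleMap 0 (θ * r₁ * r₂) (x + y)‖ -
        Real.log ‖1 - circleMap 0 (θ * r₁ * r₂) (x - y)‖ := by
  have hne (t : ℝ) : ‖1 - circleMap 0 (θ * r₁ * r₂) t‖ ≠ 0 :=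
    norm_ne_zero_iff.2 (slitPlane_ne_zero (one_sub_circleMap_mem_slitPlane h t))
  rw [conj_circleMap_zero, inv_sub_circleMap_mul_circleMap hθ, inv_sub_circleMap_mul_circleMap hθ,
    mul_div_mul_left _ _ (inv_ne_zero (ofReal_ne_zero.2 hθ)), norm_div,
    Real.log_div (hne _) (hne _), sub_eq_add_neg x]

lemma semicircleIntegral2_mul_log_eq_integral (f g : ℂ → ℂ) {θ r₁ r₂ : ℝ} (hθ : θ ≠ 0)
    (hr₁ : r₁ ≠ 0) (hr₂ : r₂ ≠ 0) (h : |θ * r₁ * r₂| < 1) :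
    semicircleIntegral2
        (fun ζ₁ ζ₂ ↦ f ζ₁ * g ζ₂ *
          (Real.log ‖((θ : ℂ)⁻¹ - ζ₁ * ζ₂) / ((θ : ℂ)⁻¹ - ζ₁ * (starRingEnd ℂ) ζ₂)‖ : ℂ) *
          ((ζ₁.im : ℂ) / ζ₁) * ((ζ₂.im : ℂ) / ζ₂))
        r₁ r₂ =
      -∫ x in 0..π, ∫ y in 0..π,
        (-((r₁ * Real.sin x : ℝ) : ℂ) * f (circleMap 0 r₁ x)) *
          (-((r₂ * Real.sin y : ℝ) : ℂ) * g (circleMap 0 r₂ y)) *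
          ((Real.log ‖1 - circleMap 0 (θ * r₁ * r₂) (x + y)‖ : ℂ) -
            Real.log ‖1 - circleMap 0 (θ * r₁ * r₂) (x - y)‖) := by
  simp only [semicircleIntegral2_eq_integral_circleMap, ← intervalIntegral.integral_neg,
    log_norm_inv_sub_div_inv_sub_conj hθ h, ofReal_sub]
  refine intervalIntegral.integral_congr fun x _ ↦ intervalIntegral.integral_congr fun y _ ↦ ?_
  have hζ₁ : circleMap 0 r₁ x ≠ 0 := circleMap_ne_center hr₁
  have hζ₂ : circleMap 0 r₂ y ≠ 0 := circleMap_ne_center hr₂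
  simp only [circleMap_zero_im]
  field_simp
  rw [I_sq]
  ring

lemma circleIntegral_circleIntegral_mul_div_inv_sub_mul_sq (f g : ℂ → ℂ) {θ : ℝ} (hθ : θ ≠ 0)
    (r₁ r₂ : ℝ) :
    (∮ z₁ in C(0, r₁), ∮ z₂ in C(0, r₂), f z₁ * g z₂ / ((θ : ℂ)⁻¹ - z₁ * z₂) ^ 2) =
      -θ * ∫ x in 0..2 * π, ∫ y in 0..2 * π, f (circleMap 0 r₁ x) * g (circleMap 0 r₂ y) *
        (circleMap 0 (θ * r₁ * r₂) (x + y) / (1 - circleMap 0 (θ * r₁ * r₂) (x + y)) ^ 2) := by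
  have hθ' : (θ : ℂ) ≠ 0 := ofReal_ne_zero.2 hθ
  simp only [circleIntegral, deriv_circleMap, smul_eq_mul, ← intervalIntegral.integral_const_mul,
    inv_sub_circleMap_mul_circleMap hθ]
  refine intervalIntegral.integral_congr fun x _ ↦ intervalIntegral.integral_congr fun y _ ↦ ?_
  generalize 1 - circleMap 0 (θ * r₁ * r₂) (x + y) = w
  rw [circleMap_zero_mul_mul_add]
  field_simp
  rw [I_sq]
  ring

lemma hasDerivAt_comp_mul_cos {φ φ' : ℝ → ℂ} (hφ : ∀ x, HasDerivAt φ (φ' x) x) (r t : ℝ) :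
    HasDerivAt (fun t ↦ φ (r * Real.cos t))
      (-((r * Real.sin t : ℝ) : ℂ) * φ' (r * Real.cos t)) t := by
  refine ((hφ _).scomp t ((Real.hasDerivAt_cos t).const_mul r)).congr_deriv ?_
  rw [real_smul, mul_neg, ofReal_neg]

lemma hasDerivAt_const_add_two_mul_pow (a : ℂ) (n : ℕ) (x : ℝ) :
    HasDerivAt (fun x : ℝ ↦ (a + 2 * (x : ℂ)) ^ n) (2 * n * (a + 2 * (x : ℂ)) ^ (n - 1)) x := by
  refine ((((hasDerivAt_id x).ofReal_comp).const_mul (2 : ℂ)).const_add a).pow n |>.congr_deriv ?_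
  simp only [id, ofReal_one]
  ring

theorem semicircle_log_integral_by_parts_general {φ₁ φ₁' φ₂ φ₂' : ℝ → ℂ}
    (hφ₁ : ∀ x, HasDerivAt φ₁ (φ₁' x) x) (hφ₂ : ∀ x, HasDerivAt φ₂ (φ₂' x) x)
    (hφ₁' : Continuous φ₁') (hφ₂' : Continuous φ₂') {θ r₁ r₂ : ℝ} (hθ : θ ≠ 0)
    (hr₁ : r₁ ≠ 0) (hr₂ : r₂ ≠ 0) (h : |θ * r₁ * r₂| < 1) :
    -semicircleIntegral2
        (fun ζ₁ ζ₂ ↦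
          φ₁' ζ₁.re * φ₂' ζ₂.re *
            (Real.log ‖((θ : ℂ)⁻¹ - ζ₁ * ζ₂) / ((θ : ℂ)⁻¹ - ζ₁ * (starRingEnd ℂ) ζ₂)‖ : ℂ) *
            ((ζ₁.im : ℂ) / ζ₁) * ((ζ₂.im : ℂ) / ζ₂))
        r₁ r₂ =
      ((2 : ℂ) * π ^ 2 / θ) * (1 / (2 * π * I)) ^ 2 *
        (∮ z₁ in C(0, r₁), ∮ z₂ in C(0, r₂),
          φ₁ z₁.re * φ₂ z₂.re / ((θ : ℂ)⁻¹ - z₁ * z₂) ^ 2) := by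
  have hu := hasDerivAt_comp_mul_cos hφ₁ r₁
  have hv := hasDerivAt_comp_mul_cos hφ₂ r₂
  have torus_eq := integral_integral_deriv_mul_deriv_mul_log_norm_one_sub_circleMap h hu hv
    (by fun_prop) (by fun_prop) (fun t ↦ by simp only [Real.cos_add_two_pi])
    (fun t ↦ by simp only [Real.cos_add_two_pi]) (fun t ↦ by simp only [Real.cos_neg])
    (fun t ↦ by simp only [Real.cos_neg])
  rw [semicircleIntegral2_mul_log_eq_integral (φ₁' ·.re) (φ₂' ·.re) hθ hr₁ hr₂ h, neg_neg,
    circleIntegral_circleIntegral_mul_div_inv_sub_mul_sq (φ₁ ·.re) (φ₂ ·.re) hθ]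
  simp only [circleMap_zero_re]
  rw [← torus_eq]
  have hθ' : (θ : ℂ) ≠ 0 := ofReal_ne_zero.2 hθ
  have hπ : (π : ℂ) ≠ 0 := ofReal_ne_zero.2 pi_ne_zero
  field_simp
  rw [I_sq]
  ring

end ContourIntegrals

/-- Integration by parts (twice) converts the double semicircle integral against the
logarithmic kernel into a double full-circle integral against `(θ⁻¹ − ζ₁ζ₂)⁻²`. -/
theorem semicircle_log_integral_by_parts
    (μ₁ ν₁ μ₂ ν₂ : ℝ) (hμ₁ : 0 < μ₁) (hν₁ : 0 < ν₁) (hμ₂ : 0 < μ₂) (hν₂ : 0 < ν₂)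
    (p q : ℕ) (hp : 1 ≤ p) (hq : 1 ≤ q) (θ : ℝ) (hθ : 0 < θ)
    (a₁ a₂ r₁ r₂ : ℝ) (ha₁ : a₁ = μ₁ + ν₁) (ha₂ : a₂ = μ₂ + ν₂)
    (hr₁ : r₁ = Real.sqrt (μ₁ * ν₁)) (hr₂ : r₂ = Real.sqrt (μ₂ * ν₂))
    (h : θ * r₁ * r₂ < 1) :
    (-(4 : ℂ)) * p * q *
      semicircleIntegral2
        (fun ζ₁ ζ₂ =>
          ((a₁ : ℂ) + 2 * (ζ₁.re : ℂ)) ^ (p - 1) * ((a₂ : ℂ) + 2 * (ζ₂.re : ℂ)) ^ (q - 1) *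
            ((Real.log ‖
                ((((θ : ℂ))⁻¹ - ζ₁ * ζ₂) / (((θ : ℂ))⁻¹ - ζ₁ * (starRingEnd ℂ) ζ₂))‖ : ℂ)) *
            ((ζ₁.im : ℂ) / ζ₁) * ((ζ₂.im : ℂ) / ζ₂))
        r₁ r₂ =
      ((2 : ℂ) * π ^ 2 / θ) * (1 / (2 * π * Complex.I)) ^ 2 *
        (∮ z₁ in C(0, r₁), ∮ z₂ in C(0, r₂),
          ((a₁ : ℂ) + 2 * (z₁.re : ℂ)) ^ p * ((a₂ : ℂ) + 2 * (z₂.re : ℂ)) ^ q /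
            (((θ : ℂ))⁻¹ - z₁ * z₂) ^ 2) := by
  have hr₁_pos : 0 < r₁ := hr₁ ▸ Real.sqrt_pos.2 (mul_pos hμ₁ hν₁)
  have hr₂_pos : 0 < r₂ := hr₂ ▸ Real.sqrt_pos.2 (mul_pos hμ₂ hν₂)
  rw [← semicircle_log_integral_by_parts_general (hasDerivAt_const_add_two_mul_pow a₁ p)
    (hasDerivAt_const_add_two_mul_pow a₂ q) (by fun_prop) (by fun_prop) hθ.ne' hr₁_pos.ne'
    hr₂_pos.ne' (by rwa [abs_of_pos (by positivity)]), neg_mul, neg_mul, neg_mul,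
    ← semicircleIntegral2_const_mul]
  congr 2
  ext ζ₁ ζ₂
  ring
end

section
/- Let μ₁, ν₁, μ₂, ν₂ > 0, set a_k = μ_k + ν_k and r_k = √(μ_k ν_k), and let θ > 0 satisfy θ·r₁·r₂ < 1. Then (1/(2πi))² · ∮∮_{counterclockwise circles of radii r₁, r₂} (a₁ + 2Re ζ₁)·(a₂ + 2Re ζ₂) / (θ^{-1} − ζ₁ζ₂)² dζ₁ dζ₂ = θ² · μ₁ν₁μ₂ν₂. -/
open Complex Real

/-!
On the circle of radius `R` about `c` one has `z̄ = c̄ + R² / (z - c)`. Hence, against a function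
`f` holomorphic inside the circle, the weight `a + 2 Re z = (a + z) + z̄` only sees the pole
contributed by `z̄`, and Cauchy's formula yields `2πi R² f(c)`. Applying this in each variable
reduces the double integral to the value of `(θ⁻¹ - ζ₁ζ₂)⁻²` at the origin.
-/

section CircleIntegral

open Metric
open scoped ComplexConjugate

variable {E : Type*} [NormedAddCommGroup E] [NormedSpace ℂ E]

lemma conj_eq_conj_center_add_of_mem_sphere {c z : ℂ} {R : ℝ} (hz : z ∈ sphere c R)
    (hR : R ≠ 0) : conj z = conj c + (R : ℂ) ^ 2 * (z - c)⁻¹ := by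
  have hzc : z - c ≠ 0 := sub_ne_zero.2 (ne_of_mem_sphere hz hR)
  have hnorm : (z - c) * conj (z - c) = (R : ℂ) ^ 2 := by
    rw [mul_conj', mem_sphere_iff_norm.1 hz]
  rw [← hnorm, mul_right_comm, mul_inv_cancel₀ hzc, one_mul, map_sub, add_sub_cancel]

variable [CompleteSpace E]

lemma circleIntegral_conj_smul {c : ℂ} {R : ℝ} (hR : 0 ≤ R) {f : ℂ → E}
    (hf : DiffContOnCl ℂ f (ball c R)) :
    (∮ z in C(c, R), conj z • f z) = (2 * π * I * (R : ℂ) ^ 2) • f c := by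
  obtain rfl | hR := hR.eq_or_lt
  · simp
  have hpole : DiffContOnCl ℂ (fun z ↦ (conj c * (z - c) + (R : ℂ) ^ 2) • f z) (ball c R) :=
    DiffContOnCl.smul (Differentiable.diffContOnCl (by fun_prop)) hf
  calc (∮ z in C(c, R), conj z • f z)
      = ∮ z in C(c, R), (z - c)⁻¹ • (conj c * (z - c) + (R : ℂ) ^ 2) • f z := by
        refine circleIntegral.integral_congr hR.le fun z hz ↦ ?_
        have hzc : z - c ≠ 0 := sub_ne_zero.2 (ne_of_mem_sphere hz hR.ne')
        simp only [conj_eq_conj_center_add_of_mem_sphere hz hR.ne', smul_smul]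
        congr 1
        field_simp
    _ = (2 * π * I * (R : ℂ) ^ 2) • f c := by
        rw [hpole.circleIntegral_sub_inv_smul (mem_ball_self hR), sub_self, mul_zero, zero_add,
          smul_smul]

lemma circleIntegral_add_two_mul_re_smul (a : ℂ) {c : ℂ} {R : ℝ} (hR : 0 ≤ R) {f : ℂ → E}
    (hf : DiffContOnCl ℂ f (ball c R)) :
    (∮ z in C(c, R), (a + 2 * (z.re : ℂ)) • f z) = (2 * π * I * (R : ℂ) ^ 2) • f c := by
  have hholo : DiffContOnCl ℂ (fun z ↦ (a + z) • f z) (ball c R) :=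
    DiffContOnCl.smul (Differentiable.diffContOnCl (by fun_prop)) hf
  have hf_cont : ContinuousOn f (sphere c R) :=
    hf.continuousOn_ball.mono sphere_subset_closedBall
  calc (∮ z in C(c, R), (a + 2 * (z.re : ℂ)) • f z)
      = ∮ z in C(c, R), ((a + z) • f z + conj z • f z) := by
        congr 1 with z
        rw [← add_smul, add_assoc, add_conj, ofReal_mul, ofReal_ofNat]
    _ = (∮ z in C(c, R), (a + z) • f z) + ∮ z in C(c, R), conj z • f z :=
        circleIntegral.integral_add
          (ContinuousOn.circleIntegrable hR (by fun_prop))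
          (ContinuousOn.circleIntegrable hR (continuous_conj.continuousOn.smul hf_cont))
    _ = (2 * π * I * (R : ℂ) ^ 2) • f c := by
        rw [hholo.circleIntegral_eq_zero hR, circleIntegral_conj_smul hR hf, zero_add]

lemma circleIntegral_circleIntegral_add_two_mul_re_smul (a₁ a₂ : ℂ) {c₁ c₂ : ℂ} {R₁ R₂ : ℝ}
    (hR₁ : 0 ≤ R₁) (hR₂ : 0 ≤ R₂) {F : ℂ → ℂ → E}
    (hF₁ : DiffContOnCl ℂ (fun z₁ ↦ F z₁ c₂) (ball c₁ R₁))
    (hF₂ : ∀ z₁ ∈ sphere c₁ R₁, DiffContOnCl ℂ (F z₁) (ball c₂ R₂)) :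
    (∮ z₁ in C(c₁, R₁), ∮ z₂ in C(c₂, R₂),
        (a₁ + 2 * (z₁.re : ℂ)) • (a₂ + 2 * (z₂.re : ℂ)) • F z₁ z₂) =
      ((2 * π * I) ^ 2 * (R₁ : ℂ) ^ 2 * (R₂ : ℂ) ^ 2) • F c₁ c₂ := by
  calc (∮ z₁ in C(c₁, R₁), ∮ z₂ in C(c₂, R₂),
        (a₁ + 2 * (z₁.re : ℂ)) • (a₂ + 2 * (z₂.re : ℂ)) • F z₁ z₂)
      = ∮ z₁ in C(c₁, R₁), (2 * π * I * (R₂ : ℂ) ^ 2) • (a₁ + 2 * (z₁.re : ℂ)) • F z₁ c₂ := by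
        refine circleIntegral.integral_congr hR₁ fun z₁ hz₁ ↦ ?_
        simp only [circleIntegral.integral_smul,
          circleIntegral_add_two_mul_re_smul a₂ hR₂ (hF₂ z₁ hz₁)]
        rw [smul_comm]
    _ = ((2 * π * I) ^ 2 * (R₁ : ℂ) ^ 2 * (R₂ : ℂ) ^ 2) • F c₁ c₂ := by
        rw [circleIntegral.integral_smul, circleIntegral_add_two_mul_re_smul a₁ hR₁ hF₁, smul_smul]
        ring_nf

end CircleIntegral

lemma inv_sub_mul_ne_zero {K : Type*} [NormedDivisionRing K] {a x y : K} (ha : a ≠ 0)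
    (h : ‖a‖ * (‖x‖ * ‖y‖) < 1) : a⁻¹ - x * y ≠ 0 := by
  intro h_eq
  have h_one : ‖a‖ * (‖x‖ * ‖y‖) = 1 := by
    rw [← norm_mul, ← norm_mul, ← sub_eq_zero.1 h_eq, mul_inv_cancel₀ ha, norm_one]
  exact h.ne h_one

lemma diffContOnCl_inv_pow_inv_sub_mul {θ z : ℂ} {R : ℝ} (hθ : θ ≠ 0) (h : ‖θ‖ * ‖z‖ * R < 1)
    (n : ℕ) : DiffContOnCl ℂ (fun w ↦ ((θ⁻¹ - z * w) ^ n)⁻¹) (Metric.ball 0 R) := by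
  refine DifferentiableOn.diffContOnCl_ball (U := Metric.closedBall 0 R)
    (DifferentiableOn.inv (by fun_prop) fun w hw ↦ ?_) subset_rfl
  refine pow_ne_zero n (inv_sub_mul_ne_zero hθ ?_)
  calc ‖θ‖ * (‖z‖ * ‖w‖) = ‖θ‖ * ‖z‖ * ‖w‖ := (mul_assoc _ _ _).symm
    _ ≤ ‖θ‖ * ‖z‖ * R := by gcongr; exact mem_closedBall_zero_iff.1 hw
    _ < 1 := h

theorem double_circle_integral_p_one_general (a₁ a₂ : ℂ) {θ : ℂ} (hθ : θ ≠ 0) {r₁ r₂ : ℝ}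
    (hr₁ : 0 ≤ r₁) (hr₂ : 0 ≤ r₂) (h : ‖θ‖ * r₁ * r₂ < 1) (n : ℕ) :
    (1 / (2 * (π : ℂ) * I)) ^ 2 *
      (∮ z₁ in C(0, r₁), ∮ z₂ in C(0, r₂),
        (a₁ + 2 * (z₁.re : ℂ)) * (a₂ + 2 * (z₂.re : ℂ)) / (θ⁻¹ - z₁ * z₂) ^ n) =
      θ ^ n * (r₁ : ℂ) ^ 2 * (r₂ : ℂ) ^ 2 := by
  have h_holo₁ : DiffContOnCl ℂ (fun z₁ : ℂ ↦ ((θ⁻¹ - z₁ * 0) ^ n)⁻¹) (Metric.ball 0 r₁) := by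
    simpa only [mul_zero] using diffContOnCl_const
  have h_holo₂ : ∀ z₁ ∈ Metric.sphere (0 : ℂ) r₁,
      DiffContOnCl ℂ (fun z₂ ↦ ((θ⁻¹ - z₁ * z₂) ^ n)⁻¹) (Metric.ball 0 r₂) := fun z₁ hz₁ ↦
    diffContOnCl_inv_pow_inv_sub_mul hθ (by rwa [mem_sphere_zero_iff_norm.1 hz₁]) n
  have h_cauchy := circleIntegral_circleIntegral_add_two_mul_re_smul a₁ a₂ hr₁ hr₂ h_holo₁ h_holo₂
  simp only [smul_eq_mul, ← div_eq_mul_inv, ← mul_div_assoc] at h_cauchy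
  rw [h_cauchy, mul_zero, sub_zero, inv_pow, div_inv_eq_mul]
  field_simp [two_pi_I_ne_zero]

/-- Residue computation: for radii `r_k = √(μ_k ν_k)` with `θ·r₁·r₂ < 1`,
`(1/(2πi))² ∮∮ (a₁ + 2Re ζ₁)(a₂ + 2Re ζ₂)/(θ⁻¹ − ζ₁ζ₂)² dζ₁ dζ₂ = θ²·μ₁ν₁μ₂ν₂`. -/
theorem double_circle_integral_p_one
    (μ₁ ν₁ μ₂ ν₂ : ℝ) (hμ₁ : 0 < μ₁) (hν₁ : 0 < ν₁) (hμ₂ : 0 < μ₂) (hν₂ : 0 < ν₂)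
    (θ : ℝ) (hθ : 0 < θ)
    (a₁ a₂ r₁ r₂ : ℝ) (ha₁ : a₁ = μ₁ + ν₁) (ha₂ : a₂ = μ₂ + ν₂)
    (hr₁ : r₁ = Real.sqrt (μ₁ * ν₁)) (hr₂ : r₂ = Real.sqrt (μ₂ * ν₂))
    (h : θ * r₁ * r₂ < 1) :
    (1 / (2 * (π : ℂ) * Complex.I)) ^ 2 *
      (∮ z₁ in C(0, r₁), ∮ z₂ in C(0, r₂),
        ((a₁ : ℂ) + 2 * (z₁.re : ℂ)) * ((a₂ : ℂ) + 2 * (z₂.re : ℂ)) /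
          (((θ : ℂ))⁻¹ - z₁ * z₂) ^ 2) =
      ((θ : ℂ)) ^ 2 * μ₁ * ν₁ * μ₂ * ν₂ := by
  have h_norm : ‖(θ : ℂ)‖ * r₁ * r₂ < 1 := by rwa [Complex.norm_of_nonneg hθ.le]
  have hr₁_sq : (r₁ : ℂ) ^ 2 = μ₁ * ν₁ := by
    exact_mod_cast hr₁ ▸ Real.sq_sqrt (mul_pos hμ₁ hν₁).le
  have hr₂_sq : (r₂ : ℂ) ^ 2 = μ₂ * ν₂ := by
    exact_mod_cast hr₂ ▸ Real.sq_sqrt (mul_pos hμ₂ hν₂).le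
  rw [double_circle_integral_p_one_general _ _ (ofReal_ne_zero.2 hθ.ne')
    (hr₁ ▸ Real.sqrt_nonneg _) (hr₂ ▸ Real.sqrt_nonneg _) h_norm, hr₁_sq, hr₂_sq]
  ring
end

section
/- Let μ₁, ν₁, μ₂, ν₂ > 0, set a_k = μ_k + ν_k, r_k = √(μ_k ν_k), and R = μ₁ν₁μ₂ν₂, and let θ > 0 satisfy θ·r₁·r₂ < 1. Then (1/(2πi))² · ∮∮_{counterclockwise circles of radii r₁, r₂} (a₁ + 2Re ζ₁)²·(a₂ + 2Re ζ₂)² / (θ^{-1} − ζ₁ζ₂)² dζ₁ dζ₂ = θ²·R·(4·a₁·a₂ + 2·θ·R). -/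
open Complex Real

/-!
On the circle `‖z - c‖ = r` the non-holomorphic factor `2 * re (z - c)` agrees with
`(z - c) + r ^ 2 / (z - c)`, so `(a + 2 * re (z - c)) ^ 2` becomes a Laurent polynomial whose
principal part is `2 * a * r ^ 2 / (z - c) + r ^ 4 / (z - c) ^ 2`. Integrating it against a
holomorphic `f` therefore only sees `f c` and `deriv f c`. This is applied twice: to
`f z = ((b - w * z) ^ 2)⁻¹`, and then to the result, which is an affine function of `w`.
-/

lemma two_mul_re_eq_add_norm_sq_div (z : ℂ) : 2 * (z.re : ℂ) = z + (‖z‖ : ℂ) ^ 2 / z := by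
  rcases eq_or_ne z 0 with rfl | hz
  · simp
  · rw [← mul_conj', mul_div_cancel_left₀ _ hz, add_conj, ofReal_mul, ofReal_ofNat]

lemma deriv_quadratic_sq_smul {𝕜 E : Type*} [NontriviallyNormedField 𝕜] [NormedAddCommGroup E]
    [NormedSpace 𝕜 E] {f : 𝕜 → E} {c : 𝕜} (hf : DifferentiableAt 𝕜 f c) (a b : 𝕜) :
    deriv (fun z ↦ ((z - c) ^ 2 + a * (z - c) + b) ^ 2 • f z) c =
      (2 * a * b) • f c + b ^ 2 • deriv f c := by
  have hsub : HasDerivAt (fun z ↦ z - c) 1 c := (hasDerivAt_id c).sub_const c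
  have hquadratic : HasDerivAt (fun z ↦ (z - c) ^ 2 + a * (z - c) + b) a c := by
    simpa using ((hsub.fun_pow 2).fun_add (hsub.const_mul a)).add_const b
  rw [((hquadratic.fun_pow 2).fun_smul hf.hasDerivAt).deriv, add_comm]
  simp [mul_right_comm]

theorem circleIntegral_add_two_mul_re_sq_smul {E : Type*} [NormedAddCommGroup E]
    [NormedSpace ℂ E] [CompleteSpace E] {f : ℂ → E} {c : ℂ} {r : ℝ} (hr : 0 < r)
    (hf : DiffContOnCl ℂ f (Metric.ball c r)) (a : ℂ) :
    (∮ z in C(c, r), (a + 2 * ((z - c).re : ℂ)) ^ 2 • f z) =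
      (2 * π * I) • ((2 * a * r ^ 2) • f c + (r : ℂ) ^ 4 • deriv f c) := by
  let g : ℂ → E := fun z ↦ ((z - c) ^ 2 + a * (z - c) + r ^ 2) ^ 2 • f z
  have hg : DiffContOnCl ℂ g (Metric.ball c r) :=
    (Differentiable.diffContOnCl (by fun_prop)).smul hf
  have hfc : DifferentiableAt ℂ f c :=
    hf.differentiableAt Metric.isOpen_ball (Metric.mem_ball_self hr)
  have hfg : Set.EqOn (fun z ↦ (a + 2 * ((z - c).re : ℂ)) ^ 2 • f z)
      (fun z ↦ (1 / (z - c) ^ 2) • g z) (Metric.sphere c r) := by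
    intro z hz
    have hzc : z - c ≠ 0 := sub_ne_zero.mpr (Metric.ne_of_mem_sphere hz hr.ne')
    simp only [g, smul_smul, two_mul_re_eq_add_norm_sq_div, mem_sphere_iff_norm.mp hz]
    congr 1
    field_simp
    ring
  calc (∮ z in C(c, r), (a + 2 * ((z - c).re : ℂ)) ^ 2 • f z)
      = ∮ z in C(c, r), (1 / (z - c) ^ 2) • g z :=
        circleIntegral.integral_congr hr.le hfg
    _ = (2 * π * I) • deriv g c := hg.deriv_eq_smul_circleIntegral hr
    _ = (2 * π * I) • ((2 * a * r ^ 2) • f c + (r : ℂ) ^ 4 • deriv f c) := by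
        rw [deriv_quadratic_sq_smul hfc, ← pow_mul]

lemma hasDerivAt_inv_sub_mul_sq {𝕜 : Type*} [NontriviallyNormedField 𝕜] {b w z : 𝕜}
    (h : b - w * z ≠ 0) :
    HasDerivAt (fun z ↦ ((b - w * z) ^ 2)⁻¹) (2 * w / (b - w * z) ^ 3) z := by
  have hlinear : HasDerivAt (fun z ↦ b - w * z) (-w) z := by
    simpa using ((hasDerivAt_id z).const_mul w).const_sub b
  refine ((hlinear.fun_pow 2).fun_inv (pow_ne_zero 2 h)).congr_deriv ?_
  push_cast
  field_simp

lemma sub_mul_ne_zero_of_norm_mul_lt {A : Type*} [NormedRing A] {b w z : A} {r : ℝ}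
    (h : ‖w‖ * r < ‖b‖) (hz : ‖z‖ ≤ r) : b - w * z ≠ 0 := by
  refine sub_ne_zero.mpr fun hb ↦ h.not_ge ?_
  calc ‖b‖ = ‖w * z‖ := by rw [hb]
    _ ≤ ‖w‖ * ‖z‖ := norm_mul_le w z
    _ ≤ ‖w‖ * r := by gcongr

theorem circleIntegral_add_two_mul_re_sq_div_sub_mul_sq {b w : ℂ} {r : ℝ} (hr : 0 < r)
    (h : ‖w‖ * r < ‖b‖) (a : ℂ) :
    (∮ z in C(0, r), (a + 2 * (z.re : ℂ)) ^ 2 / (b - w * z) ^ 2) =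
      2 * π * I * (2 * a * r ^ 2 / b ^ 2 + 2 * r ^ 4 / b ^ 3 * w) := by
  have hasDerivAt_kernel {z : ℂ} (hz : z ∈ Metric.closedBall 0 r) :
      HasDerivAt (fun z ↦ ((b - w * z) ^ 2)⁻¹) (2 * w / (b - w * z) ^ 3) z :=
    hasDerivAt_inv_sub_mul_sq (sub_mul_ne_zero_of_norm_mul_lt h (mem_closedBall_zero_iff.mp hz))
  have hdiff : DifferentiableOn ℂ (fun z ↦ ((b - w * z) ^ 2)⁻¹) (Metric.closedBall 0 r) :=
    fun z hz ↦ (hasDerivAt_kernel hz).differentiableAt.differentiableWithinAt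
  have hderiv : deriv (fun z ↦ ((b - w * z) ^ 2)⁻¹) 0 = 2 * w / b ^ 3 := by
    simpa using (hasDerivAt_kernel (Metric.mem_closedBall_self hr.le)).deriv
  have hresidue := circleIntegral_add_two_mul_re_sq_smul hr (hdiff.diffContOnCl_ball subset_rfl) a
  simp only [sub_zero, smul_eq_mul, hderiv, mul_zero, ← div_eq_mul_inv] at hresidue
  rw [hresidue]
  ring

theorem circleIntegral_add_two_mul_re_sq_mul_affine {r : ℝ} (hr : 0 < r) (a p q : ℂ) :
    (∮ z in C(0, r), (a + 2 * (z.re : ℂ)) ^ 2 * (p + q * z)) =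
      2 * π * I * (2 * a * r ^ 2 * p + r ^ 4 * q) := by
  have hdiff : Differentiable ℂ fun z : ℂ ↦ p + q * z := by fun_prop
  have hderiv : deriv (fun z : ℂ ↦ p + q * z) 0 = q := by simp
  have hresidue := circleIntegral_add_two_mul_re_sq_smul hr (c := 0) hdiff.diffContOnCl a
  simpa only [sub_zero, smul_eq_mul, hderiv, mul_zero, add_zero] using hresidue

theorem double_circleIntegral_add_two_mul_re_sq_div_sub_mul_sq {b : ℂ} {r₁ r₂ : ℝ} (hr₁ : 0 < r₁)
    (hr₂ : 0 < r₂) (h : r₁ * r₂ < ‖b‖) (a₁ a₂ : ℂ) :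
    (∮ z₁ in C(0, r₁), ∮ z₂ in C(0, r₂),
      (a₁ + 2 * (z₁.re : ℂ)) ^ 2 * (a₂ + 2 * (z₂.re : ℂ)) ^ 2 / (b - z₁ * z₂) ^ 2) =
      (2 * π * I) ^ 2 *
        ((r₁ * r₂) ^ 2 * (4 * a₁ * a₂ / b ^ 2 + 2 * (r₁ * r₂) ^ 2 / b ^ 3)) := by
  have hinner : Set.EqOn
      (fun z₁ ↦ ∮ z₂ in C(0, r₂),
        (a₁ + 2 * (z₁.re : ℂ)) ^ 2 * (a₂ + 2 * (z₂.re : ℂ)) ^ 2 / (b - z₁ * z₂) ^ 2)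
      (fun z₁ ↦ 2 * π * I * ((a₁ + 2 * (z₁.re : ℂ)) ^ 2 *
        (2 * a₂ * r₂ ^ 2 / b ^ 2 + 2 * r₂ ^ 4 / b ^ 3 * z₁)))
      (Metric.sphere 0 r₁) := by
    intro z₁ hz₁
    have hz₁b : ‖z₁‖ * r₂ < ‖b‖ := by rwa [mem_sphere_zero_iff_norm.mp hz₁]
    simp only [mul_div_assoc, circleIntegral.integral_const_mul]
    simp only [← mul_div_assoc, circleIntegral_add_two_mul_re_sq_div_sub_mul_sq hr₂ hz₁b]
    ring
  rw [circleIntegral.integral_congr hr₁.le hinner, circleIntegral.integral_const_mul,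
    circleIntegral_add_two_mul_re_sq_mul_affine hr₁]
  ring

theorem double_circle_integral_p_two_general {θ : ℂ} (hθ : θ ≠ 0) (a₁ a₂ : ℂ) {r₁ r₂ : ℝ}
    (hr₁ : 0 < r₁) (hr₂ : 0 < r₂) (h : ‖θ‖ * r₁ * r₂ < 1) :
    (1 / (2 * (π : ℂ) * I)) ^ 2 *
      (∮ z₁ in C(0, r₁), ∮ z₂ in C(0, r₂),
        (a₁ + 2 * (z₁.re : ℂ)) ^ 2 * (a₂ + 2 * (z₂.re : ℂ)) ^ 2 / (θ⁻¹ - z₁ * z₂) ^ 2) =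
      θ ^ 2 * (r₁ * r₂) ^ 2 * (4 * a₁ * a₂ + 2 * θ * (r₁ * r₂) ^ 2) := by
  have hradii : r₁ * r₂ < ‖θ⁻¹‖ := by
    rwa [norm_inv, ← one_div, lt_div_iff₀' (norm_pos_iff.mpr hθ), ← mul_assoc]
  rw [double_circleIntegral_add_two_mul_re_sq_div_sub_mul_sq hr₁ hr₂ hradii, ← mul_assoc, ← mul_pow,
    one_div_mul_cancel two_pi_I_ne_zero]
  field_simp

/-- Residue computation: for radii `r_k = √(μ_k ν_k)`, `R = μ₁ν₁μ₂ν₂` and `θ·r₁·r₂ < 1`,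
`(1/(2πi))² ∮∮ (a₁ + 2Re ζ₁)²(a₂ + 2Re ζ₂)²/(θ⁻¹ − ζ₁ζ₂)² dζ₁ dζ₂ = θ²R(4a₁a₂ + 2θR)`. -/
theorem double_circle_integral_p_two
    (μ₁ ν₁ μ₂ ν₂ : ℝ) (hμ₁ : 0 < μ₁) (hν₁ : 0 < ν₁) (hμ₂ : 0 < μ₂) (hν₂ : 0 < ν₂)
    (θ : ℝ) (hθ : 0 < θ)
    (a₁ a₂ r₁ r₂ R : ℝ) (ha₁ : a₁ = μ₁ + ν₁) (ha₂ : a₂ = μ₂ + ν₂)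
    (hr₁ : r₁ = Real.sqrt (μ₁ * ν₁)) (hr₂ : r₂ = Real.sqrt (μ₂ * ν₂))
    (hR : R = μ₁ * ν₁ * μ₂ * ν₂)
    (h : θ * r₁ * r₂ < 1) :
    (1 / (2 * (π : ℂ) * Complex.I)) ^ 2 *
      (∮ z₁ in C(0, r₁), ∮ z₂ in C(0, r₂),
        ((a₁ : ℂ) + 2 * (z₁.re : ℂ)) ^ 2 * ((a₂ : ℂ) + 2 * (z₂.re : ℂ)) ^ 2 /
          (((θ : ℂ))⁻¹ - z₁ * z₂) ^ 2) =
      ((θ : ℂ)) ^ 2 * R * (4 * a₁ * a₂ + 2 * θ * R) := by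
  have hr₁_pos : 0 < r₁ := by rw [hr₁]; positivity
  have hr₂_pos : 0 < r₂ := by rw [hr₂]; positivity
  have hR_radii : R = (r₁ * r₂) ^ 2 := by
    rw [hR, hr₁, hr₂, mul_pow, Real.sq_sqrt (by positivity), Real.sq_sqrt (by positivity),
      ← mul_assoc]
  rw [hR_radii, ofReal_pow, ofReal_mul]
  exact double_circle_integral_p_two_general (ofReal_ne_zero.mpr hθ.ne') a₁ a₂ hr₁_pos hr₂_pos
    (by rwa [Complex.norm_of_nonneg hθ.le])
end

section
/- Let μ₁, ν₁, μ₂, ν₂ > 0, set r_k = √(μ_k ν_k), let θ > 0 satisfy θ·r₁·r₂ < 1, and let β > 0, c₁, c₂ be real constants. Then the covariance expression of the main theorem with p₁ = p₂ = 1, namely (4c₁/(β(iπ)²)) · ∮∮_{upper semicircles, radii r₁, r₂} log| (θ^{-1} − ζ₁ζ₂)/(θ^{-1} − ζ₁·conj(ζ₂)) | · (Im ζ₁/ζ₁)(Im ζ₂/ζ₂) dζ₁ dζ₂ + (4(c₂ − 1 − 2β^{-1}c₁)·θ/(πi)²) · ∮∮_{upper semicircles, radii r₁, r₂} ((Im ζ₁)²/ζ₁)·((Im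 ζ₂)²/ζ₂) dζ₁ dζ₂, equals 2·c₁·β^{-1}·θ·μ₁ν₁μ₂ν₂ + (c₂ − 1 − 2β^{-1}c₁)·θ·μ₁ν₁μ₂ν₂. -/
open Complex Real

/-!
With `ζₖ = rₖ e^{itₖ}` one has `dζₖ / ζₖ = i dtₖ`, so both double integrals become real integrals
over `[0, π]²`. Replacing `t₂` by `-t₂` conjugates `ζ₂` and changes the sign of `Im ζ₂`, so the
logarithm of the quotient unfolds to `log |1 - θζ₁ζ₂|` integrated over the full circle. There
`Im ζ₂ = (ζ₂ - r₂² / ζ₂) / 2i`, and Cauchy's formulas for the holomorphic function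
`ζ₂ ↦ log (1 - θζ₁ζ₂)` give `π r₂² Im (θζ₁)` for the inner integral.
-/

open Metric

section FullCircle

variable {E : Type*} [NormedAddCommGroup E] [NormedSpace ℂ E] [CompleteSpace E]

-- The factor `circleMap 0 R t * I` is `dz/dt`, so this rewrites `Im z dt` as a form in `dz`.
lemma im_circleMap_zero_eq {R : ℝ} (hR : R ≠ 0) (t : ℝ) :
    ((circleMap 0 R t).im : ℂ) =
      circleMap 0 R t * I * (R ^ 2 / 2 * (1 / circleMap 0 R t ^ 2) - 1 / 2) := by
  have hw : circleMap 0 R t ≠ 0 := circleMap_ne_center hR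
  have hconj : circleMap 0 R t * starRingEnd ℂ (circleMap 0 R t) = R ^ 2 := by
    rw [mul_conj, normSq_eq_norm_sq, norm_circleMap_zero, sq_abs, ofReal_pow]
  rw [im_eq_sub_conj, ← hconj]
  field_simp
  rw [I_sq]
  ring

lemma integral_im_circleMap_smul {f : ℂ → E} {c : ℂ} {R : ℝ} (hR : 0 < R)
    (hf : DiffContOnCl ℂ f (ball c R)) :
    ∫ t in 0..2 * π, ((circleMap 0 R t).im : ℂ) • f (circleMap c R t) =
      (π * R ^ 2 * I) • deriv f c := by
  have hf_cont : ContinuousOn f (sphere c R) :=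
    hf.continuousOn_ball.mono sphere_subset_closedBall
  have hf_int : CircleIntegrable f c R := hf_cont.circleIntegrable hR.le
  have hf_sq_int : CircleIntegrable (fun z ↦ (1 / (z - c) ^ 2) • f z) c R := by
    refine ContinuousOn.circleIntegrable hR.le
      ((continuousOn_const.div (by fun_prop) fun z hz ↦ ?_).smul hf_cont)
    exact pow_ne_zero 2 (sub_ne_zero.mpr (ne_of_mem_sphere hz hR.ne'))
  calc ∫ t in 0..2 * π, ((circleMap 0 R t).im : ℂ) • f (circleMap c R t)
      = ∮ z in C(c, R),
          ((R ^ 2 / 2 : ℂ) • ((1 / (z - c) ^ 2) • f z) - (1 / 2 : ℂ) • f z) := by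
        simp only [circleIntegral, deriv_circleMap, circleMap_sub_center,
          im_circleMap_zero_eq hR.ne', smul_smul, ← sub_smul]
    _ = (R ^ 2 / 2 : ℂ) • ((2 * π * I : ℂ) • deriv f c) - (1 / 2 : ℂ) • (0 : E) := by
        rw [circleIntegral.integral_sub (by fun_prop) (by fun_prop),
          circleIntegral.integral_smul, circleIntegral.integral_smul,
          hf.deriv_eq_smul_circleIntegral hR, hf.circleIntegral_eq_zero hR.le]
    _ = (π * R ^ 2 * I) • deriv f c := by
        rw [smul_zero, sub_zero, smul_smul]
        ring_nf

end FullCircle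

section LogKernel

variable {a : ℂ} {R : ℝ}

lemma norm_mul_circleMap_lt_one (ha : ‖a‖ * |R| < 1) (t : ℝ) : ‖a * circleMap 0 R t‖ < 1 := by
  rwa [norm_mul, norm_circleMap_zero]

lemma one_sub_mul_circleMap_ne_zero (ha : ‖a‖ * |R| < 1) (t : ℝ) :
    1 - a * circleMap 0 R t ≠ 0 := by
  intro h
  simpa [← sub_eq_zero.mp h] using norm_mul_circleMap_lt_one ha t

lemma continuous_log_norm_one_sub_mul_circleMap (ha : ‖a‖ * |R| < 1) :
    Continuous fun t ↦ Real.log ‖1 - a * circleMap 0 R t‖ :=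
  Continuous.log (by fun_prop) fun t ↦ norm_ne_zero_iff.mpr (one_sub_mul_circleMap_ne_zero ha t)

lemma integral_log_norm_one_sub_mul_circleMap_mul_im (hR : 0 < R) (ha : ‖a‖ * R < 1) :
    ∫ t in 0..2 * π, Real.log ‖1 - a * circleMap 0 R t‖ * (circleMap 0 R t).im =
      π * R ^ 2 * a.im := by
  have hslit : ∀ z ∈ closedBall (0 : ℂ) R, 1 - a * z ∈ slitPlane := fun z hz ↦ by
    have hz' : ‖z‖ ≤ R := mem_closedBall_zero_iff.mp hz
    refine sub_eq_add_neg 1 (a * z) ▸ mem_slitPlane_of_norm_lt_one ?_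
    rw [norm_neg, norm_mul]
    exact (mul_le_mul_of_nonneg_left hz' (norm_nonneg a)).trans_lt ha
  have hdiff : DifferentiableOn ℂ (fun z ↦ log (1 - a * z)) (closedBall 0 R) :=
    DifferentiableOn.clog (by fun_prop) hslit
  have hderiv : deriv (fun z ↦ log (1 - a * z)) 0 = -a := by
    have h : HasDerivAt (fun z : ℂ ↦ 1 - a * z) (-a) 0 := by
      simpa using ((hasDerivAt_id (0 : ℂ)).const_mul a).const_sub 1
    simpa using (h.clog (by simp)).deriv
  have hcauchy := integral_im_circleMap_smul hR
    (hdiff.mono closure_ball_subset_closedBall).diffContOnCl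
  have hlog_cont : Continuous fun t ↦ log (1 - a * circleMap 0 R t) :=
    Continuous.clog (by fun_prop) fun t ↦ hslit _ (circleMap_mem_closedBall 0 hR.le t)
  have hint : IntervalIntegrable
      (fun t ↦ ((circleMap 0 R t).im : ℂ) • log (1 - a * circleMap 0 R t))
      MeasureTheory.volume 0 (2 * π) :=
    Continuous.intervalIntegrable (by fun_prop) _ _
  have hre := reCLM.intervalIntegral_comp_comm hint
  rw [hcauchy, hderiv] at hre
  simpa [mul_comm, ← ofReal_pow, log_re] using hre

end LogKernel

section HalfPeriod

variable {E : Type*} [NormedAddCommGroup E] [NormedSpace ℝ E]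

lemma integral_eq_integral_add_neg_of_periodic {g : ℝ → E} {T : ℝ}
    (hper : Function.Periodic g (2 * T)) (hcont : Continuous g) :
    ∫ t in 0..2 * T, g t = ∫ t in 0..T, (g t + g (-t)) := by
  have hint (a b : ℝ) : IntervalIntegrable g MeasureTheory.volume a b :=
    hcont.intervalIntegrable a b
  calc ∫ t in 0..2 * T, g t
      = ∫ t in -T..T, g t := by
        simpa [two_mul] using hper.intervalIntegral_add_eq 0 (-T)
    _ = (∫ t in 0..T, g t) + ∫ t in -T..0, g t := by
        rw [add_comm, intervalIntegral.integral_add_adjacent_intervals (hint _ _) (hint _ _)]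
    _ = (∫ t in 0..T, g t) + ∫ t in 0..T, g (-t) := by
        rw [intervalIntegral.integral_comp_neg, neg_zero]
    _ = ∫ t in 0..T, (g t + g (-t)) :=
        (intervalIntegral.integral_add (hint _ _)
          ((hcont.comp continuous_neg).intervalIntegrable _ _)).symm

end HalfPeriod

section HalfCircle

lemma integral_log_norm_div_mul_im_circleMap {θ ζ : ℂ} {R : ℝ} (hθ : θ ≠ 0) (hR : 0 < R)
    (h : ‖θ * ζ‖ * R < 1) :
    ∫ t in 0..π, Real.log ‖(θ⁻¹ - ζ * circleMap 0 R t) /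
        (θ⁻¹ - ζ * starRingEnd ℂ (circleMap 0 R t))‖ * (circleMap 0 R t).im =
      π * R ^ 2 * (θ * ζ).im := by
  have habs : ‖θ * ζ‖ * |R| < 1 := by rwa [abs_of_pos hR]
  have hscale (z : ℂ) : θ⁻¹ - ζ * z = θ⁻¹ * (1 - θ * ζ * z) := by field_simp
  have hne (t : ℝ) := norm_ne_zero_iff.mpr (one_sub_mul_circleMap_ne_zero habs t)
  rw [← integral_log_norm_one_sub_mul_circleMap_mul_im hR h,
    integral_eq_integral_add_neg_of_periodic]
  · refine intervalIntegral.integral_congr fun t _ ↦ ?_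
    simp only [conj_circleMap_zero, hscale, mul_div_mul_left _ _ (inv_ne_zero hθ), norm_div,
      Real.log_div (hne t) (hne (-t)), circleMap_zero_im, Real.sin_neg]
    ring
  · intro t
    simp only [periodic_circleMap 0 R t]
  · exact (continuous_log_norm_one_sub_mul_circleMap habs).mul (by fun_prop)

lemma integral_im_mul_circleMap_mul_im (θ : ℂ) (r : ℝ) :
    ∫ t in 0..π, (θ * circleMap 0 r t).im * (circleMap 0 r t).im = π * r ^ 2 / 2 * θ.re := by
  have hexpand (t : ℝ) : (θ * circleMap 0 r t).im * (circleMap 0 r t).im =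
      r ^ 2 * θ.re * Real.sin t ^ 2 + r ^ 2 * θ.im * (Real.sin t * Real.cos t) := by
    rw [mul_im, circleMap_zero_re, circleMap_zero_im]
    ring
  simp only [hexpand]
  rw [intervalIntegral.integral_add (Continuous.intervalIntegrable (by fun_prop) _ _)
      (Continuous.intervalIntegrable (by fun_prop) _ _),
    intervalIntegral.integral_const_mul, intervalIntegral.integral_const_mul,
    integral_sin_sq, integral_sin_mul_cos₁]
  simp only [Real.sin_zero, Real.sin_pi]
  ring

lemma integral_im_circleMap_sq (r : ℝ) :
    ∫ t in 0..π, (circleMap 0 r t).im ^ 2 = π * r ^ 2 / 2 := by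
  simpa [sq] using integral_im_mul_circleMap_mul_im 1 r

end HalfCircle

section DoubleIntegral

variable {r₁ r₂ : ℝ}

lemma semicircleIntegral2_ofReal_div (g : ℂ → ℂ → ℝ) (hr₁ : r₁ ≠ 0) (hr₂ : r₂ ≠ 0) :
    semicircleIntegral2 (fun ζ₁ ζ₂ ↦ (g ζ₁ ζ₂ : ℂ) / (ζ₁ * ζ₂)) r₁ r₂ =
      ((-∫ s in 0..π, ∫ t in 0..π, g (circleMap 0 r₁ s) (circleMap 0 r₂ t) : ℝ) : ℂ) := by
  have hintegrand (s t : ℝ) :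
      (g (circleMap 0 r₁ s) (circleMap 0 r₂ t) : ℂ) / (circleMap 0 r₁ s * circleMap 0 r₂ t) *
        (I * circleMap 0 r₁ s) * (I * circleMap 0 r₂ t) =
      ((-g (circleMap 0 r₁ s) (circleMap 0 r₂ t) : ℝ) : ℂ) := by
    have hs : circleMap 0 r₁ s ≠ 0 := circleMap_ne_center hr₁
    have ht : circleMap 0 r₂ t ≠ 0 := circleMap_ne_center hr₂
    field_simp
    simp
  have hparam (r t : ℝ) : (r : ℂ) * Complex.exp (I * t) = circleMap 0 r t := by
    rw [circleMap_zero, mul_comm I]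
  simp only [semicircleIntegral2, mul_assoc I, hparam, hintegrand,
    intervalIntegral.integral_ofReal, intervalIntegral.integral_neg]

lemma semicircleIntegral2_log_norm_div {θ : ℂ} (hθ : θ ≠ 0) (hr₁ : 0 < r₁) (hr₂ : 0 < r₂)
    (h : ‖θ‖ * r₁ * r₂ < 1) :
    semicircleIntegral2
      (fun ζ₁ ζ₂ ↦
        (Real.log ‖(θ⁻¹ - ζ₁ * ζ₂) / (θ⁻¹ - ζ₁ * starRingEnd ℂ ζ₂)‖ : ℂ) *
          ((ζ₁.im : ℂ) / ζ₁) * ((ζ₂.im : ℂ) / ζ₂))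
      r₁ r₂ = -(π ^ 2 * r₁ ^ 2 * r₂ ^ 2 / 2 * θ.re) := by
  have hinner (s : ℝ) := integral_log_norm_div_mul_im_circleMap
    (ζ := circleMap 0 r₁ s) hθ hr₂ (by rwa [norm_mul, norm_circleMap_zero, abs_of_pos hr₁])
  have hreal := semicircleIntegral2_ofReal_div
    (fun ζ₁ ζ₂ ↦ ζ₁.im *
      (Real.log ‖(θ⁻¹ - ζ₁ * ζ₂) / (θ⁻¹ - ζ₁ * starRingEnd ℂ ζ₂)‖ * ζ₂.im)) hr₁.ne' hr₂.ne'
  refine (congrArg (semicircleIntegral2 · r₁ r₂) ?_).trans (hreal.trans ?_)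
  · ext ζ₁ ζ₂
    push_cast
    ring
  · have houter (s : ℝ) : (circleMap 0 r₁ s).im * (π * r₂ ^ 2 * (θ * circleMap 0 r₁ s).im) =
        π * r₂ ^ 2 * ((θ * circleMap 0 r₁ s).im * (circleMap 0 r₁ s).im) := by ring
    simp only [intervalIntegral.integral_const_mul, hinner, houter,
      integral_im_mul_circleMap_mul_im]
    push_cast
    ring

lemma semicircleIntegral2_im_sq_div (hr₁ : r₁ ≠ 0) (hr₂ : r₂ ≠ 0) :
    semicircleIntegral2 (fun ζ₁ ζ₂ ↦ ((ζ₁.im : ℂ) ^ 2 / ζ₁) * ((ζ₂.im : ℂ) ^ 2 / ζ₂)) r₁ r₂ =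
      -(π ^ 2 * r₁ ^ 2 * r₂ ^ 2 / 4) := by
  have hreal := semicircleIntegral2_ofReal_div (fun ζ₁ ζ₂ ↦ ζ₁.im ^ 2 * ζ₂.im ^ 2) hr₁ hr₂
  simp only [intervalIntegral.integral_const_mul, intervalIntegral.integral_mul_const,
    integral_im_circleMap_sq, ofReal_mul, ofReal_pow, mul_div_mul_comm] at hreal
  rw [hreal]
  push_cast
  ring

end DoubleIntegral

theorem covariance_formula_p_one_general {θ β : ℂ} (c₁ c₂ : ℂ) {r₁ r₂ : ℝ} (hθ : θ ≠ 0)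
    (hβ : β ≠ 0) (hr₁ : 0 < r₁) (hr₂ : 0 < r₂) (h : ‖θ‖ * r₁ * r₂ < 1) :
    4 * c₁ / (β * (I * π) ^ 2) *
        semicircleIntegral2
          (fun ζ₁ ζ₂ ↦
            (Real.log ‖(θ⁻¹ - ζ₁ * ζ₂) / (θ⁻¹ - ζ₁ * starRingEnd ℂ ζ₂)‖ : ℂ) *
              ((ζ₁.im : ℂ) / ζ₁) * ((ζ₂.im : ℂ) / ζ₂))
          r₁ r₂ +
      4 * (c₂ - 1 - 2 * β⁻¹ * c₁) * θ / (π * I) ^ 2 *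
        semicircleIntegral2
          (fun ζ₁ ζ₂ ↦ ((ζ₁.im : ℂ) ^ 2 / ζ₁) * ((ζ₂.im : ℂ) ^ 2 / ζ₂))
          r₁ r₂ =
      2 * c₁ * β⁻¹ * θ.re * (r₁ ^ 2 * r₂ ^ 2) +
        (c₂ - 1 - 2 * β⁻¹ * c₁) * θ * (r₁ ^ 2 * r₂ ^ 2) := by
  have hπ : (π : ℂ) ≠ 0 := ofReal_ne_zero.mpr Real.pi_ne_zero
  rw [semicircleIntegral2_log_norm_div hθ hr₁ hr₂ h,
    semicircleIntegral2_im_sq_div hr₁.ne' hr₂.ne', mul_pow, mul_pow, I_sq]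
  field_simp
  ring

/-- The covariance expression of the main theorem for `p₁ = p₂ = 1` evaluates to
`2c₁β⁻¹θμ₁ν₁μ₂ν₂ + (c₂ − 1 − 2β⁻¹c₁)θμ₁ν₁μ₂ν₂`. -/
theorem covariance_formula_p_one
    (μ₁ ν₁ μ₂ ν₂ : ℝ) (hμ₁ : 0 < μ₁) (hν₁ : 0 < ν₁) (hμ₂ : 0 < μ₂) (hν₂ : 0 < ν₂)
    (θ : ℝ) (hθ : 0 < θ) (β c₁ c₂ : ℝ) (hβ : 0 < β)
    (r₁ r₂ : ℝ) (hr₁ : r₁ = Real.sqrt (μ₁ * ν₁)) (hr₂ : r₂ = Real.sqrt (μ₂ * ν₂))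
    (h : θ * r₁ * r₂ < 1) :
    ((4 * c₁ : ℂ) / (β * (Complex.I * π) ^ 2)) *
        semicircleIntegral2
          (fun ζ₁ ζ₂ =>
            ((Real.log (‖
                ((((θ : ℂ))⁻¹ - ζ₁ * ζ₂) / (((θ : ℂ))⁻¹ - ζ₁ * (starRingEnd ℂ) ζ₂))‖) : ℂ)) *
              ((ζ₁.im : ℂ) / ζ₁) * ((ζ₂.im : ℂ) / ζ₂))
          r₁ r₂ +
      ((4 * (c₂ - 1 - 2 * β⁻¹ * c₁) * θ : ℂ) / (π * Complex.I) ^ 2) *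
        semicircleIntegral2
          (fun ζ₁ ζ₂ => ((ζ₁.im : ℂ) ^ 2 / ζ₁) * ((ζ₂.im : ℂ) ^ 2 / ζ₂))
          r₁ r₂ =
      ((2 * c₁ * β⁻¹ * θ * (μ₁ * ν₁ * μ₂ * ν₂)
        + (c₂ - 1 - 2 * β⁻¹ * c₁) * θ * (μ₁ * ν₁ * μ₂ * ν₂) : ℝ) : ℂ) := by
  subst hr₁ hr₂
  rw [ofReal_inv, covariance_formula_p_one_general c₁ c₂ (by simpa using hθ.ne')
    (by simpa using hβ.ne') (by positivity) (by positivity) (by simpa [abs_of_pos hθ] using h),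
    ofReal_re, ← ofReal_pow, ← ofReal_pow, Real.sq_sqrt (by positivity),
    Real.sq_sqrt (by positivity)]
  push_cast
  ring
end
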